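/- arXiv:2408.03051 — 2 statements merged into one kernel-verified Lean document; each statement's English description precedes it below -/
import Mathlib

section
/- Let $\alpha_1,\alpha_2>0$ and $H\in(0,2)$ with $H\neq 1$. Then, as $s\to 0^+$, $r_{12}(s)=C_0-\nu_1\nu_2\,\frac{\rho-\eta}{2}\,s^{H}+\Big(-\alpha_2\,C_0+\alpha_1^{1-H}\,\Gamma(H+1)\,\nu_1\nu_2\,\frac{\rho-\eta}{2}\Big)s+\frac{(\alpha_2-\alpha_1)\,\nu_1\nu_2}{H+1}\,\frac{\rho-\eta}{2}\,s^{1+H}+\Big(\frac{\alpha_2^{2}}{2}\,C_0-\frac{1}{2}\,\nu_1\nu_2\,\frac{\rho-\eta}{2}\,\Gamma(H+1)\big(\alpha_2\,\alpha_1^{1-H}-\alpha_1^{2-H}\big)\Big)s^{2}+o\big(s^{\max\{2,\,1+H\}}\big)$. -/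
open MeasureTheory Filter Asymptotics Topology Real

/-!
Write `K v = H (H - 1) ∫_{-∞}^0 exp (a u) (v - u) ^ (H - 2) du`, so that `r₁₂` is a combination of
`exp (-b s)` and `exp (-b s) ∫₀ˢ exp (b v) K v dv`, where `a = α₁` and `b = α₂`. The substitution
`x = v - u` turns `K v` into `exp (a v)` times an upper incomplete gamma integral of exponent
`H - 2`. Integrating by parts twice raises the exponent to `H`, where the integral is
`a ^ (-1 - H) Γ(H + 1)` minus a lower incomplete gamma integral of size `O(v ^ (H + 1))`; this gives
`K v = a ^ (1 - H) Γ(H + 1) (1 + a v) - H v ^ (H - 1) - a v ^ H + O(v ^ min 2 (H + 1))`.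
Multiplying by Taylor polynomials of the exponentials and integrating once yields `r₁₂` up to
`O(s ^ min 3 (2 + H))`, which is negligible against `s ^ max 2 (1 + H)` when `0 < H < 2`.
-/

section ShortTimeAsymptotics

theorem isBigO_rpow_rpow_nhdsGT_zero {p q : ℝ} (h : q ≤ p) :
    (fun s : ℝ ↦ s ^ p) =O[𝓝[>] 0] fun s ↦ s ^ q := by
  refine IsBigO.of_bound' ?_
  filter_upwards [Ioo_mem_nhdsGT (zero_lt_one (α := ℝ))] with s hs
  rw [norm_of_nonneg (rpow_nonneg hs.1.le _), norm_of_nonneg (rpow_nonneg hs.1.le _)]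
  exact rpow_le_rpow_of_exponent_ge hs.1 hs.2.le h

theorem isLittleO_rpow_rpow_nhdsGT_zero {p q : ℝ} (h : q < p) :
    (fun s : ℝ ↦ s ^ p) =o[𝓝[>] 0] fun s ↦ s ^ q := by
  have hlim : Tendsto (fun s : ℝ ↦ s ^ (p - q)) (𝓝[>] 0) (𝓝 0) := by
    have hcont := continuousAt_rpow_const 0 (p - q) (Or.inr (sub_nonneg.2 h.le))
    simpa only [zero_rpow (sub_pos.2 h).ne'] using hcont.tendsto.mono_left nhdsWithin_le_nhds
  refine (isLittleO_iff_tendsto' ?_).2 (hlim.congr' ?_)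
  · filter_upwards [self_mem_nhdsWithin] with s hs hzero
    exact absurd hzero (rpow_pos_of_pos hs q).ne'
  · filter_upwards [self_mem_nhdsWithin] with s hs
    exact rpow_sub hs p q

theorem isBigO_mul_of_continuousAt {α 𝕜 : Type*} [TopologicalSpace α] [NormedField 𝕜]
    {u f g : α → 𝕜} {x : α} {t : Set α} (hu : ContinuousAt u x) (hf : f =O[𝓝[t] x] g) :
    (fun y ↦ u y * f y) =O[𝓝[t] x] g := by
  simpa only [one_mul] using ((hu.mono_left nhdsWithin_le_nhds).isBigO_one 𝕜).mul hf

theorem isBigO_rpow_mul_exp_sub_sum_range (c p : ℝ) (n : ℕ) :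
    (fun s : ℝ ↦ s ^ p * (exp (c * s) - ∑ i ∈ Finset.range n, (c * s) ^ i / i.factorial))
      =O[𝓝[>] 0] fun s ↦ s ^ (p + n) := by
  have hlim : Tendsto (fun s : ℝ ↦ c * s) (𝓝[>] 0) (𝓝 0) := by
    simpa only [mul_zero] using ((continuous_const_mul c).tendsto 0).mono_left nhdsWithin_le_nhds
  have htaylor : (fun s : ℝ ↦ exp (c * s) - ∑ i ∈ Finset.range n, (c * s) ^ i / i.factorial)
      =O[𝓝[>] 0] fun s ↦ s ^ n :=
    ((exp_sub_sum_range_isBigO_pow n).comp_tendsto hlim).trans <|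
      ((isBigO_refl _ _).const_mul_left (c ^ n)).congr_left fun s ↦ (mul_pow c s n).symm
  refine ((isBigO_refl _ _).mul htaylor).congr' .rfl ?_
  filter_upwards [self_mem_nhdsWithin] with s hs
  exact (rpow_add_natCast hs.ne' p n).symm

theorem isBigO_intervalIntegral_rpow_add_one {E : Type*} [NormedAddCommGroup E] [NormedSpace ℝ E]
    {f : ℝ → E} {q : ℝ} (hq : -1 < q) (hf : f =O[𝓝[>] 0] fun v : ℝ ↦ v ^ q) :
    (fun s ↦ ∫ v in (0 : ℝ)..s, f v) =O[𝓝[>] 0] fun s : ℝ ↦ s ^ (q + 1) := by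
  obtain ⟨C, hC⟩ := hf.bound
  obtain ⟨ε, hε, hbound⟩ := mem_nhdsGT_iff_exists_Ioo_subset.1 hC
  refine IsBigO.of_bound (C / (q + 1)) ?_
  filter_upwards [Ioo_mem_nhdsGT hε] with s hs
  calc ‖∫ v in (0 : ℝ)..s, f v‖ ≤ ∫ v in (0 : ℝ)..s, C * v ^ q := by
        refine intervalIntegral.norm_integral_le_of_norm_le hs.1.le (.of_forall fun v hv ↦ ?_)
          ((intervalIntegral.intervalIntegrable_rpow' hq).const_mul C)
        rw [← norm_of_nonneg (rpow_nonneg hv.1.le q)]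
        exact hbound ⟨hv.1, hv.2.trans_lt hs.2⟩
    _ = C / (q + 1) * ‖s ^ (q + 1)‖ := by
        rw [intervalIntegral.integral_const_mul, integral_rpow (Or.inl hq),
          zero_rpow (by linarith), norm_of_nonneg (rpow_nonneg hs.1.le _)]
        ring

end ShortTimeAsymptotics

section IncompleteGamma

variable {a p v : ℝ}

theorem continuous_rpow_mul_exp_neg_mul (a : ℝ) (hp : 0 ≤ p) :
    Continuous fun x : ℝ ↦ x ^ p * exp (-(a * x)) :=
  (continuous_rpow_const hp).mul (by fun_prop)

theorem tendsto_rpow_mul_exp_neg_mul_atTop (ha : 0 < a) (p : ℝ) :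
    Tendsto (fun x : ℝ ↦ x ^ p * exp (-(a * x))) atTop (𝓝 0) :=
  (isLittleO_rpow_exp_pos_mul_atTop p ha).tendsto_div_nhds_zero.congr fun x ↦ by
    rw [exp_neg, div_eq_mul_inv]

theorem integrableOn_Ioi_rpow_mul_exp_neg_mul (ha : 0 < a) (hv : 0 < v) (p : ℝ) :
    IntegrableOn (fun x : ℝ ↦ x ^ p * exp (-(a * x))) (Set.Ioi v) := by
  refine integrable_of_isBigO_exp_neg (half_pos ha) ?_ ?_
  · refine ContinuousOn.mul (fun x hx ↦ ?_) (by fun_prop)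
    exact (continuousAt_rpow_const x p (Or.inl (hv.trans_le hx).ne')).continuousWithinAt
  · have hdecay := (isLittleO_rpow_exp_pos_mul_atTop p (half_pos ha)).isBigO.mul
      (isBigO_refl (fun x : ℝ ↦ exp (-(a * x))) atTop)
    refine hdecay.congr_right fun x ↦ ?_
    rw [← exp_add]
    ring_nf

theorem mul_integral_Ioi_rpow_mul_exp_neg_mul (ha : 0 < a) (hv : 0 < v) (p : ℝ) :
    p * ∫ x in Set.Ioi v, x ^ (p - 1) * exp (-(a * x)) =
      a * (∫ x in Set.Ioi v, x ^ p * exp (-(a * x))) - v ^ p * exp (-(a * v)) := by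
  have hint := integrableOn_Ioi_rpow_mul_exp_neg_mul ha hv
  have hparts : ∫ x in Set.Ioi v, (p * (x ^ (p - 1) * exp (-(a * x))) -
      a * (x ^ p * exp (-(a * x)))) = 0 - v ^ p * exp (-(a * v)) := by
    refine integral_Ioi_of_hasDerivAt_of_tendsto' (f := fun x ↦ x ^ p * exp (-(a * x)))
      (fun x hx ↦ ?_) (((hint _).const_mul p).sub ((hint p).const_mul a))
      (tendsto_rpow_mul_exp_neg_mul_atTop ha p)
    have hrpow := hasDerivAt_rpow_const (p := p) (Or.inl (hv.trans_le hx).ne')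
    have hexp := ((hasDerivAt_id x).const_mul a).neg.exp
    exact (hrpow.mul hexp).congr_deriv (by simp only [id, Pi.neg_apply]; ring)
  rw [integral_sub ((hint _).const_mul p) ((hint p).const_mul a), integral_const_mul,
    integral_const_mul] at hparts
  linarith

theorem integral_Ioi_rpow_mul_exp_neg_mul_eq_sub (ha : 0 < a) (hp : -1 < p) (hv : 0 < v) :
    ∫ x in Set.Ioi v, x ^ p * exp (-(a * x)) =
      a ^ (-(p + 1)) * Gamma (p + 1) - ∫ x in (0 : ℝ)..v, x ^ p * exp (-(a * x)) := by
  have hint : IntegrableOn (fun x : ℝ ↦ x ^ p * exp (-(a * x))) (Set.Ioi 0) := by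
    simpa only [rpow_one, neg_mul] using integrableOn_rpow_mul_exp_neg_mul_rpow hp one_pos ha
  have htotal := integral_rpow_mul_exp_neg_mul_Ioi (a := p + 1) (by linarith) ha
  rw [add_sub_cancel_right, one_div, inv_rpow ha.le, ← rpow_neg ha.le] at htotal
  rw [← htotal, ← intervalIntegral.integral_interval_add_Ioi hint
    (integrableOn_Ioi_rpow_mul_exp_neg_mul ha hv p), add_sub_cancel_left]

theorem isBigO_integral_rpow_mul_exp_neg_mul (a : ℝ) (hp : -1 < p) :
    (fun v ↦ ∫ x in (0 : ℝ)..v, x ^ p * exp (-(a * x))) =O[𝓝[>] 0] fun v : ℝ ↦ v ^ (p + 1) := by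
  refine isBigO_intervalIntegral_rpow_add_one hp ?_
  simpa only [mul_comm] using isBigO_mul_of_continuousAt
    (by fun_prop : ContinuousAt (fun x : ℝ ↦ exp (-(a * x))) 0) (isBigO_refl (fun x ↦ x ^ p) _)

theorem integral_Iic_exp_mul_rpow_sub (a p v : ℝ) :
    ∫ u in Set.Iic (0 : ℝ), exp (a * u) * (v - u) ^ p =
      exp (a * v) * ∫ x in Set.Ioi v, x ^ p * exp (-(a * x)) := by
  have hsubst := (Measure.measurePreserving_sub_left volume v).setIntegral_preimage_emb
    (MeasurableEquiv.subLeft v).measurableEmbedding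
    (fun x ↦ exp (a * v) * (x ^ p * exp (-(a * x)))) (Set.Ici v)
  have hpreimage : (fun u ↦ v - u) ⁻¹' Set.Ici v = Set.Iic 0 := by ext u; simp
  rw [← integral_const_mul, ← integral_Ici_eq_integral_Ioi, ← hsubst, hpreimage]
  refine integral_congr_ae (.of_forall fun u ↦ ?_)
  have hexp : exp (a * u) = exp (a * v) * exp (-(a * (v - u))) := by
    rw [← exp_add]
    ring_nf
  simp only [hexp]
  ring

end IncompleteGamma

/-- Up to a constant factor, the covariance density between the Ornstein–Uhlenbeck past
`∫_{-∞}^0 e^{a u} dB_u` and the second driving noise at time `v > 0`: the increments of the two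
noises at lag `x` have covariance density proportional to `H (H - 1) x ^ (H - 2)`. -/
noncomputable def ouKernel (a H v : ℝ) : ℝ :=
  H * (H - 1) * ∫ u in Set.Iic (0 : ℝ), exp (a * u) * (v - u) ^ (H - 2)

section OUKernel

variable {a H : ℝ}

theorem ouKernel_eq (ha : 0 < a) (hH : -1 < H) {v : ℝ} (hv : 0 < v) :
    ouKernel a H v = a ^ (1 - H) * Gamma (H + 1) * exp (a * v) - H * v ^ (H - 1) - a * v ^ H -
      a ^ 2 * (exp (a * v) * ∫ x in (0 : ℝ)..v, x ^ H * exp (-(a * x))) := by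
  have hparts := mul_integral_Ioi_rpow_mul_exp_neg_mul ha hv H
  have hparts' := mul_integral_Ioi_rpow_mul_exp_neg_mul ha hv (H - 1)
  rw [show H - 1 - 1 = H - 2 by ring] at hparts'
  rw [integral_Ioi_rpow_mul_exp_neg_mul_eq_sub ha hH hv] at hparts
  have hpow : a ^ (1 - H) = a ^ 2 * a ^ (-(H + 1)) := by
    rw [← rpow_natCast, ← rpow_add ha]
    push_cast
    ring_nf
  have hexp : exp (a * v) * exp (-(a * v)) = 1 := by rw [← exp_add, add_neg_cancel, exp_zero]
  rw [ouKernel, integral_Iic_exp_mul_rpow_sub, hpow]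
  linear_combination exp (a * v) * (H * hparts' + a * hparts) -
    (H * v ^ (H - 1) + a * v ^ H) * hexp

theorem intervalIntegrable_ouKernel (ha : 0 < a) (hH : 0 < H) {s : ℝ} (hs : 0 ≤ s) :
    IntervalIntegrable (ouKernel a H) volume 0 s := by
  have hlower : Continuous fun v ↦ ∫ x in (0 : ℝ)..v, x ^ H * exp (-(a * x)) :=
    intervalIntegral.continuous_primitive
      (fun _ _ ↦ (continuous_rpow_mul_exp_neg_mul a hH.le).intervalIntegrable _ _) 0
  have hexp : Continuous fun v ↦ exp (a * v) := by fun_prop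
  have hcont : Continuous fun v ↦ a ^ (1 - H) * Gamma (H + 1) * exp (a * v) - a * v ^ H -
      a ^ 2 * (exp (a * v) * ∫ x in (0 : ℝ)..v, x ^ H * exp (-(a * x))) :=
    ((hexp.const_mul (a ^ (1 - H) * Gamma (H + 1))).sub
      ((continuous_rpow_const hH.le).const_mul a)).sub ((hexp.mul hlower).const_mul (a ^ 2))
  have hsing : IntervalIntegrable (fun v : ℝ ↦ H * v ^ (H - 1)) volume 0 s :=
    (intervalIntegral.intervalIntegrable_rpow' (by linarith)).const_mul H
  refine ((hcont.intervalIntegrable 0 s).sub hsing).congr fun v hv ↦ ?_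
  rw [Set.uIoc_of_le hs] at hv
  rw [ouKernel_eq ha (by linarith) hv.1]
  ring

theorem isBigO_exp_mul_ouKernel_sub (ha : 0 < a) (hH : 0 < H) (b : ℝ) :
    (fun v ↦ exp (b * v) * ouKernel a H v -
      (a ^ (1 - H) * Gamma (H + 1) * (1 + (a + b) * v) - H * v ^ (H - 1) - (a + b * H) * v ^ H))
      =O[𝓝[>] 0] fun v : ℝ ↦ v ^ min 2 (H + 1) := by
  set A := a ^ (1 - H) * Gamma (H + 1)
  have hconst : (fun v ↦ exp ((a + b) * v) - (1 + (a + b) * v))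
      =O[𝓝[>] 0] fun v : ℝ ↦ v ^ min 2 (H + 1) := by
    refine .trans ?_ (isBigO_rpow_rpow_nhdsGT_zero (min_le_left _ _))
    simpa [Finset.sum_range_succ] using isBigO_rpow_mul_exp_sub_sum_range (a + b) 0 2
  have hsing : (fun v ↦ v ^ (H - 1) * (exp (b * v) - (1 + b * v)))
      =O[𝓝[>] 0] fun v : ℝ ↦ v ^ min 2 (H + 1) := by
    refine .trans ?_ (isBigO_rpow_rpow_nhdsGT_zero (min_le_right _ _))
    simpa [Finset.sum_range_succ, show H - 1 + 2 = H + 1 by ring] using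
      isBigO_rpow_mul_exp_sub_sum_range b (H - 1) 2
  have hrpow : (fun v ↦ v ^ H * (exp (b * v) - 1)) =O[𝓝[>] 0] fun v : ℝ ↦ v ^ min 2 (H + 1) := by
    refine .trans ?_ (isBigO_rpow_rpow_nhdsGT_zero (min_le_right _ _))
    simpa using isBigO_rpow_mul_exp_sub_sum_range b H 1
  have hlower : (fun v ↦ exp ((a + b) * v) * ∫ x in (0 : ℝ)..v, x ^ H * exp (-(a * x)))
      =O[𝓝[>] 0] fun v : ℝ ↦ v ^ min 2 (H + 1) :=
    (isBigO_mul_of_continuousAt (by fun_prop)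
      (isBigO_integral_rpow_mul_exp_neg_mul a (by linarith))).trans
      (isBigO_rpow_rpow_nhdsGT_zero (min_le_right _ _))
  refine ((((hconst.const_mul_left A).sub (hsing.const_mul_left H)).sub
    (hrpow.const_mul_left a)).sub (hlower.const_mul_left (a ^ 2))).congr' ?_ .rfl
  filter_upwards [self_mem_nhdsWithin] with v hv
  have hexp : exp ((a + b) * v) = exp (b * v) * exp (a * v) := by
    rw [← exp_add]
    ring_nf
  have hpow : v ^ H = v ^ (H - 1) * v := by rw [← rpow_add_one hv.ne', sub_add_cancel]
  rw [ouKernel_eq ha (by linarith) hv, hexp]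
  linear_combination -(b * H) * hpow

theorem isBigO_integral_exp_mul_ouKernel_sub (ha : 0 < a) (hH : 0 < H) (b : ℝ) :
    (fun s ↦ (∫ v in (0 : ℝ)..s, exp (b * v) * ouKernel a H v) -
      (a ^ (1 - H) * Gamma (H + 1) * (s + (a + b) / 2 * s ^ 2) - s ^ H -
        (a + b * H) / (H + 1) * s ^ (H + 1)))
      =O[𝓝[>] 0] fun s : ℝ ↦ s ^ min 3 (H + 2) := by
  have hmin : min (2 : ℝ) (H + 1) + 1 = min 3 (H + 2) := by grind
  have hq : -1 < min 2 (H + 1) := lt_min (by norm_num) (by linarith)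
  rw [← hmin]
  refine (isBigO_intervalIntegral_rpow_add_one hq
    (isBigO_exp_mul_ouKernel_sub ha hH b)).congr' ?_ .rfl
  filter_upwards [self_mem_nhdsWithin] with s hs
  have hkernel : IntervalIntegrable (fun v ↦ exp (b * v) * ouKernel a H v) volume 0 s :=
    (intervalIntegrable_ouKernel ha hH (le_of_lt hs)).continuousOn_mul (by fun_prop)
  have hlin : IntervalIntegrable (fun v ↦ a ^ (1 - H) * Gamma (H + 1) * (1 + (a + b) * v))
      volume 0 s := Continuous.intervalIntegrable (by fun_prop) _ _
  have hsing : IntervalIntegrable (fun v : ℝ ↦ H * v ^ (H - 1)) volume 0 s :=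
    (intervalIntegral.intervalIntegrable_rpow' (by linarith)).const_mul H
  have hrpow : IntervalIntegrable (fun v : ℝ ↦ (a + b * H) * v ^ H) volume 0 s :=
    (intervalIntegral.intervalIntegrable_rpow' (by linarith)).const_mul _
  rw [intervalIntegral.integral_sub hkernel ((hlin.sub hsing).sub hrpow),
    intervalIntegral.integral_sub (hlin.sub hsing) hrpow, intervalIntegral.integral_sub hlin hsing,
    intervalIntegral.integral_const_mul, intervalIntegral.integral_const_mul,
    intervalIntegral.integral_const_mul, integral_rpow (Or.inl (by linarith)),
    integral_rpow (Or.inl (by linarith)), intervalIntegral.integral_add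
      intervalIntegrable_const (Continuous.intervalIntegrable (by fun_prop) _ _),
    intervalIntegral.integral_const_mul, integral_one, integral_id, sub_add_cancel,
    zero_rpow hH.ne', zero_rpow (by linarith)]
  field

theorem isBigO_exp_neg_mul_integral_exp_mul_ouKernel_sub (ha : 0 < a) (hH : 0 < H) (b : ℝ) :
    (fun s ↦ exp (-b * s) * (∫ v in (0 : ℝ)..s, exp (b * v) * ouKernel a H v) -
      (a ^ (1 - H) * Gamma (H + 1) * (s + (a - b) / 2 * s ^ 2) - s ^ H +
        (b - a) / (H + 1) * s ^ (H + 1)))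
      =O[𝓝[>] 0] fun s : ℝ ↦ s ^ min 3 (H + 2) := by
  set A := a ^ (1 - H) * Gamma (H + 1)
  have hremainder := isBigO_mul_of_continuousAt
    (by fun_prop : ContinuousAt (fun s : ℝ ↦ exp (-b * s)) 0)
    (isBigO_integral_exp_mul_ouKernel_sub ha hH b)
  have hfirst (p : ℝ) (hp : min 3 (H + 2) ≤ p + 2) :
      (fun s ↦ s ^ p * (exp (-b * s) - (1 - b * s)))
        =O[𝓝[>] 0] fun s : ℝ ↦ s ^ min 3 (H + 2) := by
    refine .trans ?_ (isBigO_rpow_rpow_nhdsGT_zero hp)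
    simpa [Finset.sum_range_succ, sub_eq_add_neg] using
      isBigO_rpow_mul_exp_sub_sum_range (-b) p 2
  have hzeroth (p : ℝ) (hp : min 3 (H + 2) ≤ p + 1) :
      (fun s ↦ s ^ p * (exp (-b * s) - 1)) =O[𝓝[>] 0] fun s : ℝ ↦ s ^ min 3 (H + 2) := by
    refine .trans ?_ (isBigO_rpow_rpow_nhdsGT_zero hp)
    simpa using isBigO_rpow_mul_exp_sub_sum_range (-b) p 1
  have hlin := hfirst 1 ((min_le_left _ _).trans (by norm_num))
  have hrpow := hfirst H (min_le_right _ _)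
  have hsq := hzeroth 2 ((min_le_left _ _).trans (by norm_num))
  have hrpow' := hzeroth (H + 1) ((min_le_right _ _).trans (by linarith))
  refine ((((hremainder.add (hlin.const_mul_left A)).add
    (hsq.const_mul_left (A * ((a + b) / 2)))).sub hrpow).sub
    (hrpow'.const_mul_left ((a + b * H) / (H + 1)))).congr' ?_ .rfl
  filter_upwards [self_mem_nhdsWithin] with s hs
  rw [rpow_one, rpow_two, rpow_add_one (ne_of_gt hs)]
  field

end OUKernel

theorem stmt4_general
    (α1 α2 ν1 ν2 H ρ η C0 : ℝ) (hα1 : 0 < α1) (hH : 0 < H)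
    (I12 : ℝ → ℝ)
    (hI12 : ∀ s, I12 s =
      ∫ v in (0 : ℝ)..s, exp (α2 * v) *
        ∫ u in Set.Iic (0 : ℝ), exp (α1 * u) * (v - u) ^ (H - 2))
    (r12 : ℝ → ℝ)
    (hr12 : ∀ s, r12 s = exp (-α2 * s) * C0 +
      ν1 * ν2 * exp (-α2 * s) * (H * (H - 1)) * ((ρ - η) / 2) * I12 s) :
    (fun s : ℝ ↦ r12 s -
        (C0 - ν1 * ν2 * ((ρ - η) / 2) * s ^ H +
          (-α2 * C0 + α1 ^ (1 - H) * Gamma (H + 1) * ν1 * ν2 * ((ρ - η) / 2)) * s +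
          (α2 - α1) * ν1 * ν2 / (H + 1) * ((ρ - η) / 2) * s ^ (1 + H) +
          (α2 ^ 2 / 2 * C0 -
            1 / 2 * ν1 * ν2 * ((ρ - η) / 2) * Gamma (H + 1) *
              (α2 * α1 ^ (1 - H) - α1 ^ (2 - H))) * s ^ (2 : ℕ)))
      =O[𝓝[>] (0 : ℝ)] fun s : ℝ ↦ s ^ min 3 (2 + H) := by
  have hexp : (fun s ↦ exp (-α2 * s) - (1 - α2 * s + α2 ^ 2 / 2 * s ^ 2))
      =O[𝓝[>] 0] fun s : ℝ ↦ s ^ min 3 (H + 2) := by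
    refine .trans ?_ (isBigO_rpow_rpow_nhdsGT_zero (min_le_left _ _))
    refine (isBigO_rpow_mul_exp_sub_sum_range (-α2) 0 3).congr (fun s ↦ ?_) (fun s ↦ ?_)
    · simp only [rpow_zero, Finset.sum_range_succ, Finset.sum_range_zero, Nat.factorial]
      push_cast
      ring
    · norm_num
  have hkernel := isBigO_exp_neg_mul_integral_exp_mul_ouKernel_sub hα1 hH α2
  rw [add_comm 2 H]
  refine ((hexp.const_mul_left C0).add
    (hkernel.const_mul_left (ν1 * ν2 * ((ρ - η) / 2)))).congr_left fun s ↦ ?_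
  have hI : ∫ v in (0 : ℝ)..s, exp (α2 * v) * ouKernel α1 H v = H * (H - 1) * I12 s := by
    simp only [ouKernel, hI12, ← intervalIntegral.integral_const_mul, mul_left_comm]
  have hpow : α1 ^ (2 - H) = α1 ^ (1 - H) * α1 := by
    rw [← rpow_add_one hα1.ne']
    ring_nf
  rw [hI, hr12, hpow, add_comm 1 H]
  ring

/-- Short-time expansion of the lagged cross-covariance `r₁₂` of the bivariate
fractional Ornstein–Uhlenbeck process, for `H = H₁ + H₂ ≠ 1` (Lemma 2.5). -/
theorem stmt4
    (α1 α2 ν1 ν2 H ρ η : ℝ)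
    (hα1 : 0 < α1) (hα2 : 0 < α2) (hν1 : 0 < ν1) (hν2 : 0 < ν2)
    (hH : H ∈ Set.Ioo (0:ℝ) 2) (hH1 : H ≠ 1)
    (C0 : ℝ)
    (hC0 : C0 = Real.Gamma (H + 1) * ν1 * ν2 / (2 * (α1 + α2)) *
      ((α1 ^ (1 - H) + α2 ^ (1 - H)) * ρ + (α2 ^ (1 - H) - α1 ^ (1 - H)) * η))
    (I12 : ℝ → ℝ)
    (hI12 : ∀ s, I12 s =
      ∫ v in (0:ℝ)..s, Real.exp (α2 * v) *
        ∫ u in Set.Iic (0:ℝ), Real.exp (α1 * u) * (v - u) ^ (H - 2))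
    (r12 : ℝ → ℝ)
    (hr12 : ∀ s, r12 s = Real.exp (-α2 * s) * C0 +
      ν1 * ν2 * Real.exp (-α2 * s) * (H * (H - 1)) * ((ρ - η) / 2) * I12 s) :
    (fun s : ℝ => r12 s -
        (C0 - ν1 * ν2 * ((ρ - η) / 2) * s ^ H +
          (-α2 * C0 + α1 ^ (1 - H) * Real.Gamma (H + 1) * ν1 * ν2 * ((ρ - η) / 2)) * s +
          (α2 - α1) * ν1 * ν2 / (H + 1) * ((ρ - η) / 2) * s ^ (1 + H) +
          (α2 ^ 2 / 2 * C0 -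
            1 / 2 * ν1 * ν2 * ((ρ - η) / 2) * Real.Gamma (H + 1) *
              (α2 * α1 ^ (1 - H) - α1 ^ (2 - H))) * s ^ (2 : ℕ)))
      =o[𝓝[>] (0:ℝ)] fun s : ℝ => s ^ max 2 (1 + H) := by
  have hexponent : max 2 (1 + H) < min 3 (2 + H) := by grind
  exact (stmt4_general α1 α2 ν1 ν2 H ρ η C0 hα1 hH.1 I12 hI12 r12 hr12).trans_isLittleO
    (isLittleO_rpow_rpow_nhdsGT_zero hexponent)
end

section
/- Let $\alpha_1,\alpha_2>0$ and $C_0,c\in\mathbb{R}$. Define $r(s)=e^{-\alpha_2 s}\Big(C_0+c\,\int_0^s e^{\alpha_2 v}\big(\int_{-\infty}^0 e^{\alpha_1 u}(v-u)^{-1}\,du\big)dv\Big)$ for $s\ge 0$. Then, as $s\to 0^+$, $r(s)=C_0-c\,s\log s+O(s)$. -/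
open MeasureTheory Filter Asymptotics Topology Real

/-! Near `v = 0` the inner integral only feels the weight `w u = exp (α₁ u)` close to `u = 0`.
Subtracting the truncated constant `w 0` on `(b, 0]`, whose transform is
`w 0 * (log (v - b) - log v)`, leaves a weight `ψ` with `ψ u / u` integrable, and
`|ψ u / (v - u)| ≤ |ψ u / u|` bounds its transform uniformly in `v`. Hence the inner integral is
`-log v + O(1)`, and integrating `log` gives `-s log s + O(s)`. The smooth exponential factors
equal `1 + O(s)`, which perturbs neither expansion. -/

open Set

lemma isBigO_mul_sub_mul_of_differentiableAt {𝕜 : Type*} [NontriviallyNormedField 𝕜] {a : 𝕜}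
    {l : Filter 𝕜} {φ f g : 𝕜 → 𝕜} {h : 𝕜 → ℝ} (hl : l ≤ 𝓝 a) (hφ : DifferentiableAt 𝕜 φ a)
    (hfg : (fun x ↦ f x - g x) =O[l] h) (hg : (fun x ↦ (x - a) * g x) =O[l] h) :
    (fun x ↦ φ x * f x - φ a * g x) =O[l] h := by
  have hφ_bdd : φ =O[l] (1 : 𝕜 → ℝ) := (hφ.continuousAt.mono_left hl).isBigO_one ℝ
  have h_main : (fun x ↦ φ x * (f x - g x)) =O[l] h := by
    simpa only [Pi.one_apply, one_mul] using hφ_bdd.mul hfg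
  have h_diff : (fun x ↦ (φ x - φ a) * g x) =O[l] h :=
    ((hφ.isBigO_sub.mono hl).mul (isBigO_refl g l)).trans hg
  exact (h_main.add h_diff).congr_left fun x ↦ by ring

lemma isBigO_mul_log_one : (fun x ↦ x * log x) =O[𝓝 0] (1 : ℝ → ℝ) :=
  continuous_mul_log.continuousAt.isBigO_one ℝ

section NormedSpace

variable {E : Type*} [NormedAddCommGroup E] {a : ℝ} {f : ℝ → E}

lemma isBigO_intervalIntegral_of_isBigO_one [NormedSpace ℝ E] (hf : f =O[𝓝[>] a] (1 : ℝ → ℝ)) :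
    (fun s ↦ ∫ x in a..s, f x) =O[𝓝[>] a] fun s ↦ s - a := by
  obtain ⟨C, hC⟩ := hf.bound
  obtain ⟨b, hab, hb⟩ := mem_nhdsGT_iff_exists_Ioc_subset.1 hC
  refine IsBigO.of_bound C ?_
  filter_upwards [Ioc_mem_nhdsGT hab] with s hs
  refine intervalIntegral.norm_integral_le_of_norm_le_const fun x hx ↦ ?_
  rw [uIoc_of_le hs.1.le] at hx
  simpa using hb ⟨hx.1, hx.2.trans hs.2⟩

lemma eventually_intervalIntegrable_of_integrableAtFilter
    (hf : IntegrableAtFilter f (𝓝[>] a)) :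
    ∀ᶠ s in 𝓝[>] a, IntervalIntegrable f volume a s := by
  obtain ⟨t, ht, hft⟩ := hf
  obtain ⟨b, hab, hb⟩ := mem_nhdsGT_iff_exists_Ioc_subset.1 ht
  filter_upwards [Ioc_mem_nhdsGT hab] with s hs
  rw [intervalIntegrable_iff_integrableOn_Ioc_of_le hs.1.le]
  exact hft.mono_set ((Ioc_subset_Ioc_right hs.2).trans hb)

end NormedSpace

lemma isBigO_intervalIntegral_add_mul_log {f : ℝ → ℝ} {k : ℝ} (hfm : AEStronglyMeasurable f)
    (hf : (fun v ↦ f v + k * log v) =O[𝓝[>] 0] (1 : ℝ → ℝ)) :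
    (fun s ↦ (∫ v in 0..s, f v) + k * (s * log s)) =O[𝓝[>] 0] fun s ↦ s := by
  have h_sum_integrable : IntegrableAtFilter (fun v ↦ f v + k * log v) (𝓝[>] 0) :=
    (volume.finiteAt_nhdsWithin 0 _).integrableAtFilter
      (hfm.add (measurable_log.const_mul k).aestronglyMeasurable).stronglyMeasurableAtFilter
      ((isBigO_one_iff ℝ).1 hf)
  have h_integral : (fun s ↦ ∫ v in 0..s, f v + k * log v) =O[𝓝[>] 0] fun s ↦ s := by
    simpa only [sub_zero] using isBigO_intervalIntegral_of_isBigO_one hf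
  refine (h_integral.add ((isBigO_refl (fun s : ℝ ↦ s) (𝓝[>] 0)).const_mul_left k)).congr' ?_ .rfl
  filter_upwards [eventually_intervalIntegrable_of_integrableAtFilter h_sum_integrable] with s hs
  have h_log : IntervalIntegrable (fun v ↦ k * log v) volume 0 s :=
    intervalIntegral.intervalIntegrable_log'.const_mul k
  have hf_integrable : IntervalIntegrable f volume 0 s := by
    simpa only [add_sub_cancel_right] using hs.sub h_log
  rw [intervalIntegral.integral_add hf_integrable h_log, intervalIntegral.integral_const_mul,
    integral_log]
  ring

/-- The Stieltjes transform `∫_{-∞}^0 w(u) / (v - u) du` of a weight `w` on the negative half-line,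
the inner integral of the cross-covariance when `w u = exp (α₁ u)`. It is meant for `v > 0`, where
the kernel has no singularity on `(-∞, 0]`. -/
noncomputable def stieltjesTransform (w : ℝ → ℝ) (v : ℝ) : ℝ :=
  ∫ u in Iic 0, w u * (v - u)⁻¹

namespace stieltjesTransform

variable {w : ℝ → ℝ} {v b : ℝ}

lemma aestronglyMeasurable (hw : AEStronglyMeasurable w (volume.restrict (Iic 0))) :
    AEStronglyMeasurable (stieltjesTransform w) := by
  have h_kernel : Measurable fun p : ℝ × ℝ ↦ (p.1 - p.2)⁻¹ := by fun_prop
  exact (hw.comp_snd.mul h_kernel.aestronglyMeasurable).integral_prod_right'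

lemma ae_norm_mul_inv_sub_le (w : ℝ → ℝ) (hv : 0 ≤ v) :
    ∀ᵐ u ∂volume.restrict (Iic 0), ‖w u * (v - u)⁻¹‖ ≤ ‖u⁻¹ * w u‖ := by
  rw [← restrict_Iio_eq_restrict_Iic]
  filter_upwards [ae_restrict_mem measurableSet_Iio] with u (hu : u < 0)
  rw [norm_mul, norm_mul, mul_comm, norm_inv, norm_inv, norm_of_nonneg (by linarith),
    norm_of_nonpos hu.le]
  gcongr
  · linarith
  · linarith

lemma norm_le_integral_norm_inv_mul (hw : IntegrableOn (fun u ↦ u⁻¹ * w u) (Iic 0)) (hv : 0 ≤ v) :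
    ‖stieltjesTransform w v‖ ≤ ∫ u in Iic 0, ‖u⁻¹ * w u‖ :=
  norm_integral_le_of_norm_le hw.norm (ae_norm_mul_inv_sub_le w hv)

lemma integrableOn_mul_inv_sub (hw : IntegrableOn w (Iic 0)) (hv : 0 < v) :
    IntegrableOn (fun u ↦ w u * (v - u)⁻¹) (Iic 0) := by
  refine hw.mul_bdd (c := v⁻¹) (by fun_prop) ?_
  filter_upwards [ae_restrict_mem measurableSet_Iic] with u (hu : u ≤ 0)
  rw [norm_inv, norm_of_nonneg (by linarith)]
  gcongr
  linarith

lemma sub_apply {w₁ w₂ : ℝ → ℝ} (hw₁ : IntegrableOn w₁ (Iic 0)) (hw₂ : IntegrableOn w₂ (Iic 0))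
    (hv : 0 < v) :
    stieltjesTransform (w₁ - w₂) v = stieltjesTransform w₁ v - stieltjesTransform w₂ v := by
  simp only [stieltjesTransform, Pi.sub_apply, sub_mul]
  exact integral_sub (integrableOn_mul_inv_sub hw₁ hv) (integrableOn_mul_inv_sub hw₂ hv)

lemma indicator_const_apply (k : ℝ) (hb : b ≤ 0) (hv : 0 < v) :
    stieltjesTransform ((Ioc b 0).indicator fun _ ↦ k) v = k * (log (v - b) - log v) := by
  calc stieltjesTransform ((Ioc b 0).indicator fun _ ↦ k) v
      = ∫ u in Iic 0, (Ioc b 0).indicator (fun u ↦ k * (v - u)⁻¹) u := by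
        simp only [stieltjesTransform, indicator_mul_left]
    _ = ∫ u in b..0, k * (v - u)⁻¹ := by
        rw [setIntegral_indicator measurableSet_Ioc, inter_eq_right.2 Ioc_subset_Iic_self,
          intervalIntegral.integral_of_le hb]
    _ = k * ∫ x in v..(v - b), x⁻¹ := by
        rw [intervalIntegral.integral_const_mul,
          intervalIntegral.integral_comp_sub_left (fun x ↦ x⁻¹), sub_zero]
    _ = k * (log (v - b) - log v) := by
        rw [integral_inv_of_pos hv (by linarith), log_div (by linarith) hv.ne']

lemma integrableOn_inv_mul_sub_indicator (hb : b < 0) (hw : IntegrableOn w (Iic 0))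
    (h_slope : IntegrableOn (slope w 0) (Ioc b 0)) :
    IntegrableOn (fun u ↦ u⁻¹ * (w - (Ioc b 0).indicator fun _ ↦ w 0) u) (Iic 0) := by
  rw [← Iic_union_Ioc_eq_Iic hb.le, integrableOn_union]
  constructor
  · have h_far : IntegrableOn (fun u ↦ u⁻¹ * w u) (Iic b) := by
      refine (hw.mono_set (Iic_subset_Iic.2 hb.le)).bdd_mul (c := (-b)⁻¹) (by fun_prop) ?_
      filter_upwards [ae_restrict_mem measurableSet_Iic] with u (hu : u ≤ b)
      rw [norm_inv, norm_of_nonpos (by linarith)]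
      gcongr
      linarith
    refine h_far.congr_fun (fun u (hu : u ≤ b) ↦ ?_) measurableSet_Iic
    simp [hu.not_gt]
  · refine h_slope.congr_fun (fun u hu ↦ ?_) measurableSet_Ioc
    simp [slope_def_module, hu.1, hu.2]

theorem isBigO_add_mul_log_of_integrableAtFilter_slope (hw : IntegrableOn w (Iic 0))
    (h_slope : IntegrableAtFilter (slope w 0) (𝓝[≤] 0)) :
    (fun v ↦ stieltjesTransform w v + w 0 * log v) =O[𝓝[>] 0] (1 : ℝ → ℝ) := by
  obtain ⟨t, ht, h_slope_t⟩ := h_slope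
  obtain ⟨b, hb, hbt⟩ := mem_nhdsLE_iff_exists_Ioc_subset.1 ht
  set κ : ℝ → ℝ := (Ioc b 0).indicator fun _ ↦ w 0
  have hκ : IntegrableOn κ (Iic 0) :=
    (integrable_indicator_iff measurableSet_Ioc).2 (integrableOn_const (by simp)) |>.integrableOn
  have h_remainder : stieltjesTransform (w - κ) =O[𝓝[>] 0] (1 : ℝ → ℝ) := by
    refine IsBigO.of_bound (∫ u in Iic 0, ‖u⁻¹ * (w - κ) u‖) ?_
    filter_upwards [self_mem_nhdsWithin] with v (hv : 0 < v)
    simpa using norm_le_integral_norm_inv_mul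
      (integrableOn_inv_mul_sub_indicator hb hw (h_slope_t.mono_set hbt)) hv.le
  have h_log : (fun v ↦ w 0 * log (v - b)) =O[𝓝[>] 0] (1 : ℝ → ℝ) := by
    have h_cont : ContinuousAt (fun v ↦ w 0 * log (v - b)) 0 := by
      fun_prop (disch := simpa using hb.ne)
    exact (h_cont.mono_left nhdsWithin_le_nhds).isBigO_one ℝ
  refine (h_remainder.add h_log).congr' ?_ .rfl
  filter_upwards [self_mem_nhdsWithin] with v (hv : 0 < v)
  rw [sub_apply hw hκ hv, indicator_const_apply _ hb.le hv]
  ring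

theorem isBigO_add_mul_log_of_differentiableAt (hw : IntegrableOn w (Iic 0))
    (hw0 : DifferentiableAt ℝ w 0) :
    (fun v ↦ stieltjesTransform w v + w 0 * log v) =O[𝓝[>] 0] (1 : ℝ → ℝ) := by
  have h_slope_meas : StronglyMeasurableAtFilter (slope w 0) (𝓝[≤] 0) := by
    refine ⟨Iic 0, self_mem_nhdsWithin, ?_⟩
    rw [slope_fun_def]
    have hw_meas := hw.aestronglyMeasurable
    fun_prop
  have h_slope_bdd : slope w 0 =O[𝓝 0] (1 : ℝ → ℝ) := by
    refine ((isBigO_refl (fun u : ℝ ↦ (u - 0)⁻¹) (𝓝 0)).smul hw0.isBigO_sub).trans ?_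
    refine IsBigO.of_bound 1 (Eventually.of_forall fun u ↦ ?_)
    simpa using inv_mul_le_one
  exact isBigO_add_mul_log_of_integrableAtFilter_slope hw <|
    (volume.finiteAt_nhdsWithin 0 _).integrableAtFilter h_slope_meas
      ((isBigO_one_iff ℝ).1 (h_slope_bdd.mono nhdsWithin_le_nhds))

theorem isBigO_intervalIntegral_mul_add_mul_log {φ : ℝ → ℝ} (hφm : AEStronglyMeasurable φ)
    (hφ : DifferentiableAt ℝ φ 0) (hw : IntegrableOn w (Iic 0)) (hw0 : DifferentiableAt ℝ w 0) :
    (fun s ↦ (∫ v in 0..s, φ v * stieltjesTransform w v) + φ 0 * w 0 * (s * log s))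
      =O[𝓝[>] 0] fun s ↦ s := by
  have h_transform : (fun v ↦ stieltjesTransform w v - -(w 0 * log v)) =O[𝓝[>] 0] (1 : ℝ → ℝ) := by
    simpa only [sub_neg_eq_add] using isBigO_add_mul_log_of_differentiableAt hw hw0
  have h_mul_log : (fun v ↦ (v - 0) * -(w 0 * log v)) =O[𝓝[>] 0] (1 : ℝ → ℝ) :=
    ((isBigO_mul_log_one.mono nhdsWithin_le_nhds).const_mul_left (-w 0)).congr_left
      fun v ↦ by ring
  refine isBigO_intervalIntegral_add_mul_log
    (hφm.mul (aestronglyMeasurable hw.aestronglyMeasurable)) ?_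
  exact (isBigO_mul_sub_mul_of_differentiableAt nhdsWithin_le_nhds hφ h_transform
    h_mul_log).congr_left fun v ↦ by ring

end stieltjesTransform

theorem stmt5_general (α1 α2 C0 c : ℝ) (hα1 : 0 < α1) (r : ℝ → ℝ)
    (hr : ∀ s, r s = exp (-α2 * s) *
      (C0 + c * ∫ v in (0 : ℝ)..s, exp (α2 * v) *
        ∫ u in Iic (0 : ℝ), exp (α1 * u) * (v - u)⁻¹)) :
    (fun s : ℝ ↦ r s - (C0 - c * s * log s)) =O[𝓝[>] (0 : ℝ)] fun s : ℝ ↦ s := by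
  set I : ℝ → ℝ := fun s ↦ ∫ v in 0..s, exp (α2 * v) * stieltjesTransform (fun u ↦ exp (α1 * u)) v
  have h_integral : (fun s ↦ I s + s * log s) =O[𝓝[>] 0] fun s ↦ s := by
    simpa using stieltjesTransform.isBigO_intervalIntegral_mul_add_mul_log
      (φ := fun v ↦ exp (α2 * v)) (by fun_prop) (by fun_prop)
      (integrableOn_exp_mul_Iic hα1 0) (by fun_prop)
  have h_bracket : (fun s ↦ (C0 + c * I s) - (C0 - c * (s * log s))) =O[𝓝[>] 0] fun s ↦ s :=
    (h_integral.const_mul_left c).congr_left fun s ↦ by ring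
  have h_bdd : (fun s ↦ C0 - c * (s * log s)) =O[𝓝[>] 0] (1 : ℝ → ℝ) :=
    (isBigO_const_const C0 one_ne_zero _).sub
      ((isBigO_mul_log_one.mono nhdsWithin_le_nhds).const_mul_left c)
  have h_linear : (fun s ↦ (s - 0) * (C0 - c * (s * log s))) =O[𝓝[>] 0] fun s ↦ s := by
    simpa using (isBigO_refl (fun s : ℝ ↦ s) (𝓝[>] 0)).mul h_bdd
  refine (isBigO_mul_sub_mul_of_differentiableAt (φ := fun s ↦ exp (-α2 * s)) nhdsWithin_le_nhds
    (by fun_prop) h_bracket h_linear).congr_left fun s ↦ ?_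
  rw [hr, mul_zero, exp_zero, one_mul, mul_assoc c]
  rfl

/-- Short-time expansion of the cross-covariance of the bivariate fractional
Ornstein–Uhlenbeck process in the boundary case `H = H₁ + H₂ = 1`:
`r(s) = C₀ - c s log s + O(s)` as `s → 0⁺`. -/
theorem stmt5
    (α1 α2 C0 c : ℝ) (hα1 : 0 < α1) (hα2 : 0 < α2)
    (r : ℝ → ℝ)
    (hr : ∀ s, r s = Real.exp (-α2 * s) *
      (C0 + c * ∫ v in (0:ℝ)..s, Real.exp (α2 * v) *
        ∫ u in Set.Iic (0:ℝ), Real.exp (α1 * u) * (v - u)⁻¹)) :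
    (fun s : ℝ => r s - (C0 - c * s * Real.log s)) =O[𝓝[>] (0:ℝ)] fun s : ℝ => s :=
  stmt5_general α1 α2 C0 c hα1 r hr
end
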